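/- Let β ∈ [0, 2/3) and let v = (v_x, v_y, v_z) ∈ ℝ³ be a unit vector with v_z² < 1. In ℂ⁴ with standard orthonormal basis m₀, m₁, m₂, m₃ define E01 = [√(1−(3/2)β)·m₀ + √(β/2)·(v_x m₁ + v_y m₂ + v_z m₃)]/√(1−β), E10 = [√(1−(3/2)β)·m₀ − √(β/2)·(v_x m₁ + v_y m₂ + v_z m₃)]/√(1−β), E00 = [(−v_x v_z − i v_y) m₁ + (−v_y v_z + i v_x) m₂ + (1−v_z²) m₃]/√(2(1−v_z²)), and E11 = [(−v_x v_z + i v_y) m₁ + (−v_y v_z − i v_x) m₂ + (1−v_z²) m₃]/√(2(1−v_z²)). Then: (i) E01, E10, E00, E11 are all unit vectors; (ii) ⟨E01, E10⟩ = (1−2β)/(1−β); (iii) ⟨E00, E11⟩ = 0; (iv) E00 and E11 are each orthogonal to both E01 and E10. -/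

import Mathlib

open Matrix

/-- Hermitian inner product on `ℂ⁴`, antilinear in the first argument. -/
noncomputable def ip (x y : Fin 4 → ℂ) : ℂ :=
  ∑ i, (starRingEnd ℂ) (x i) * y i

/-! Write `v` for the measurement direction and `e` for the `z`-axis. In the splitting
`ℂ⁴ = ℂ m₀ ⊕ ℂ³`, the vectors `E01` and `E10` are `(p, ± q v)` with `p` and `q` real, while
`E00` and `E11` are, up to normalisation, `(0, a ± i b)` with `a = e - (v ⬝ e) v` and `b = e × v`.
Both `a` and `b` are orthogonal to `v`, they are orthogonal to each other, and both have squared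
length `e ⬝ e - (v ⬝ e)²`; so `a + i b` and `a - i b` are orthogonal, like opposite circular
polarisations. -/

section ComplexVector

variable {n : Type*}

/-- The complex vector with real part `a` and imaginary part `b`, used to express Hermitian inner
products through real dot products. -/
def complexVec (a b : n → ℝ) : n → ℂ := fun i => ⟨a i, b i⟩

theorem star_complexVec_dotProduct_complexVec [Fintype n] (a b c d : n → ℝ) :
    star (complexVec a b) ⬝ᵥ complexVec c d = ⟨a ⬝ᵥ c + b ⬝ᵥ d, a ⬝ᵥ d - b ⬝ᵥ c⟩ := by
  apply Complex.ext <;>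
    simp [complexVec, dotProduct, Finset.sum_add_distrib, sub_eq_add_neg]

end ComplexVector

section Transverse

variable {R n : Type*} [CommRing R] [Fintype n]

/-- The component of `e` transverse to `v`, that is, its projection onto the orthogonal complement
of `v` when `v` is a unit vector. -/
def transverse (v e : n → R) : n → R := e - (v ⬝ᵥ e) • v

theorem dotProduct_transverse {v : n → R} (hv : v ⬝ᵥ v = 1) (e : n → R) :
    v ⬝ᵥ transverse v e = 0 := by
  simp [transverse, hv]

theorem transverse_dotProduct_self {v : n → R} (hv : v ⬝ᵥ v = 1) (e : n → R) :
    transverse v e ⬝ᵥ transverse v e = e ⬝ᵥ e - (v ⬝ᵥ e) ^ 2 := by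
  calc transverse v e ⬝ᵥ transverse v e
      = e ⬝ᵥ transverse v e - (v ⬝ᵥ e) * (v ⬝ᵥ transverse v e) := by
        nth_rw 1 [transverse]
        rw [sub_dotProduct, smul_dotProduct, smul_eq_mul]
    _ = e ⬝ᵥ transverse v e := by rw [dotProduct_transverse hv, mul_zero, sub_zero]
    _ = e ⬝ᵥ e - (v ⬝ᵥ e) ^ 2 := by
        rw [transverse, dotProduct_sub, dotProduct_smul, dotProduct_comm e v, smul_eq_mul, sq]

theorem transverse_dotProduct_cross (v e : Fin 3 → R) : transverse v e ⬝ᵥ (e ⨯₃ v) = 0 := by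
  simp [transverse, sub_dotProduct]

theorem cross_dotProduct_cross_self (v w : Fin 3 → R) :
    (v ⨯₃ w) ⬝ᵥ (v ⨯₃ w) = (v ⬝ᵥ v) * (w ⬝ᵥ w) - (v ⬝ᵥ w) ^ 2 := by
  rw [cross_dot_cross, dotProduct_comm w v, sq]

end Transverse

section AncillaStates

theorem ip_complexVec (a b c d : Fin 4 → ℝ) :
    ip (complexVec a b) (complexVec c d) = ⟨a ⬝ᵥ c + b ⬝ᵥ d, a ⬝ᵥ d - b ⬝ᵥ c⟩ :=
  star_complexVec_dotProduct_complexVec a b c d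

/-- Eve's ancilla state when the two outcomes differ: `E01` for `σ = 1` and `E10` for `σ = -1`. -/
noncomputable def anticorrelatedState (β σ : ℝ) (v : Fin 3 → ℝ) : Fin 4 → ℂ :=
  complexVec ((√(1 - β))⁻¹ • vecCons √(1 - 3 / 2 * β) ((σ * √(β / 2)) • v)) 0

/-- Eve's ancilla state when the two outcomes agree: `E00` for `σ = 1` and `E11` for `σ = -1`,
where the reference axis `e` is the `z`-axis. -/
noncomputable def correlatedState (σ : ℝ) (v e : Fin 3 → ℝ) : Fin 4 → ℂ :=
  complexVec ((√(2 * (e ⬝ᵥ e - (v ⬝ᵥ e) ^ 2)))⁻¹ • vecCons 0 (transverse v e))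
    ((√(2 * (e ⬝ᵥ e - (v ⬝ᵥ e) ^ 2)))⁻¹ • vecCons 0 (σ • (e ⨯₃ v)))

variable {v e : Fin 3 → ℝ}

theorem ip_anticorrelatedState {β : ℝ} (hβ₀ : 0 ≤ β) (hβ : β ≤ 2 / 3) (hv : v ⬝ᵥ v = 1)
    (σ τ : ℝ) :
    ip (anticorrelatedState β σ v) (anticorrelatedState β τ v) =
      ((1 - 3 / 2 * β + σ * τ * (β / 2)) / (1 - β) : ℝ) := by
  have hs : √(1 - 3 / 2 * β) ^ 2 = 1 - 3 / 2 * β := Real.sq_sqrt (by linarith)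
  have ht : √(β / 2) ^ 2 = β / 2 := Real.sq_sqrt (by linarith)
  have hd : (√(1 - β))⁻¹ ^ 2 = (1 - β)⁻¹ := by rw [inv_pow, Real.sq_sqrt (by linarith)]
  rw [anticorrelatedState, anticorrelatedState, ip_complexVec]
  apply Complex.ext
  · rw [Complex.ofReal_re, zero_dotProduct, add_zero]
    calc _ = (√(1 - β))⁻¹ ^ 2 * (√(1 - 3 / 2 * β) ^ 2 + σ * τ * √(β / 2) ^ 2) := by
          simp only [smul_dotProduct, dotProduct_smul, cons_dotProduct_cons, hv, smul_eq_mul]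
          ring
      _ = (1 - 3 / 2 * β + σ * τ * (β / 2)) / (1 - β) := by rw [hd, hs, ht, inv_mul_eq_div]
  · simp only [Complex.ofReal_im, dotProduct_zero, zero_dotProduct, sub_zero]

theorem ip_anticorrelatedState_self {β σ : ℝ} (hβ₀ : 0 ≤ β) (hβ : β ≤ 2 / 3) (hv : v ⬝ᵥ v = 1)
    (hσ : σ ^ 2 = 1) :
    ip (anticorrelatedState β σ v) (anticorrelatedState β σ v) = 1 := by
  rw [ip_anticorrelatedState hβ₀ hβ hv, ← Complex.ofReal_one, ← sq, hσ]
  congr 1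
  rw [div_eq_one_iff_eq (by linarith)]
  ring

theorem ip_anticorrelatedState_neg {β σ : ℝ} (hβ₀ : 0 ≤ β) (hβ : β ≤ 2 / 3) (hv : v ⬝ᵥ v = 1)
    (hσ : σ ^ 2 = 1) :
    ip (anticorrelatedState β σ v) (anticorrelatedState β (-σ) v) =
      ((1 - 2 * β) / (1 - β) : ℝ) := by
  rw [ip_anticorrelatedState hβ₀ hβ hv, mul_neg, ← sq, hσ]
  congr 2
  ring

theorem ip_correlatedState (hv : v ⬝ᵥ v = 1) (hve : (v ⬝ᵥ e) ^ 2 < e ⬝ᵥ e) (σ τ : ℝ) :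
    ip (correlatedState σ v e) (correlatedState τ v e) = ((1 + σ * τ) / 2 : ℝ) := by
  have hpos : 0 < e ⬝ᵥ e - (v ⬝ᵥ e) ^ 2 := sub_pos.mpr hve
  have hd : (√(2 * (e ⬝ᵥ e - (v ⬝ᵥ e) ^ 2)))⁻¹ ^ 2 * (e ⬝ᵥ e - (v ⬝ᵥ e) ^ 2) = 1 / 2 := by
    rw [inv_pow, Real.sq_sqrt (by positivity)]
    field_simp
  rw [correlatedState, correlatedState, ip_complexVec]
  apply Complex.ext
  · simp only [smul_dotProduct, dotProduct_smul, cons_dotProduct_cons, smul_eq_mul,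
      transverse_dotProduct_self hv, cross_dotProduct_cross_self, hv, dotProduct_comm e v,
      Complex.ofReal_re]
    linear_combination (1 + σ * τ) * hd
  · simp [dotProduct_comm (e ⨯₃ v), transverse_dotProduct_cross]

theorem ip_correlatedState_self {σ : ℝ} (hv : v ⬝ᵥ v = 1) (hve : (v ⬝ᵥ e) ^ 2 < e ⬝ᵥ e)
    (hσ : σ ^ 2 = 1) :
    ip (correlatedState σ v e) (correlatedState σ v e) = 1 := by
  rw [ip_correlatedState hv hve, ← sq, hσ, add_self_div_two, Complex.ofReal_one]

theorem ip_correlatedState_neg {σ : ℝ} (hv : v ⬝ᵥ v = 1) (hve : (v ⬝ᵥ e) ^ 2 < e ⬝ᵥ e)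
    (hσ : σ ^ 2 = 1) :
    ip (correlatedState σ v e) (correlatedState (-σ) v e) = 0 := by
  rw [ip_correlatedState hv hve, mul_neg, ← sq, hσ, add_neg_cancel, zero_div, Complex.ofReal_zero]

theorem ip_correlatedState_anticorrelatedState (hv : v ⬝ᵥ v = 1) (β σ τ : ℝ) :
    ip (correlatedState σ v e) (anticorrelatedState β τ v) = 0 := by
  rw [correlatedState, anticorrelatedState, ip_complexVec]
  apply Complex.ext <;> simp [dotProduct_comm _ v, dotProduct_transverse hv]

theorem anticorrelatedState_vec (β σ x y z : ℝ) :
    anticorrelatedState β σ ![x, y, z] =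
      ![(√(1 - 3 / 2 * β) : ℂ) / √(1 - β), σ * (√(β / 2) * x) / √(1 - β),
        σ * (√(β / 2) * y) / √(1 - β), σ * (√(β / 2) * z) / √(1 - β)] := by
  ext i
  fin_cases i <;>
    simp only [anticorrelatedState, complexVec, Complex.mk_eq_add_mul_I, smul_cons, smul_empty,
      smul_eq_mul, Pi.zero_apply, Fin.zero_eta, Fin.mk_one, Fin.reduceFinMk, cons_val] <;>
    push_cast <;>
    ring

theorem correlatedState_vec (σ x y z : ℝ) :
    correlatedState σ ![x, y, z] ![0, 0, 1] =
      ![0, (-(x * z) - σ * y * Complex.I) / √(2 * (1 - z ^ 2)),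
        (-(y * z) + σ * x * Complex.I) / √(2 * (1 - z ^ 2)),
        (1 - z ^ 2) / √(2 * (1 - z ^ 2))] := by
  have hnorm : ![0, 0, 1] ⬝ᵥ ![0, 0, 1] - (![x, y, z] ⬝ᵥ ![0, 0, 1]) ^ 2 = 1 - z ^ 2 := by simp
  have htransverse : transverse ![x, y, z] ![0, 0, 1] = ![-(x * z), -(y * z), 1 - z ^ 2] := by
    simp [transverse, mul_comm z, sq]
  have hcross : ![0, 0, 1] ⨯₃ ![x, y, z] = ![-y, x, 0] := by simp [cross_apply]
  ext i
  fin_cases i <;>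
    simp only [correlatedState, hnorm, htransverse, hcross, complexVec, Complex.mk_eq_add_mul_I,
      smul_cons, smul_empty, smul_eq_mul, Fin.zero_eta, Fin.mk_one, Fin.reduceFinMk, cons_val] <;>
    push_cast <;>
    ring

end AncillaStates

/-- **Structure of Eve's conditional ancilla states.** The four purification
vectors `E^v_{xy}` are unit vectors, `⟨E01,E10⟩ = (1-2β)/(1-β)`,
`⟨E00,E11⟩ = 0`, and `E00, E11` are orthogonal to `E01, E10`. -/
theorem stmt3 (β vx vy vz : ℝ) (hβ : β ∈ Set.Ico (0:ℝ) (2/3))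
    (hunit : vx^2 + vy^2 + vz^2 = 1) (hvz : vz^2 < 1) :
    let s1 : ℂ := (Real.sqrt (1 - 3/2*β) : ℝ)
    let s2 : ℂ := (Real.sqrt (β/2) : ℝ)
    let d1 : ℂ := (Real.sqrt (1 - β) : ℝ)
    let d2 : ℂ := (Real.sqrt (2*(1 - vz^2)) : ℝ)
    let E01 : Fin 4 → ℂ := ![s1/d1, s2*(vx:ℂ)/d1, s2*(vy:ℂ)/d1, s2*(vz:ℂ)/d1]
    let E10 : Fin 4 → ℂ := ![s1/d1, -(s2*(vx:ℂ))/d1, -(s2*(vy:ℂ))/d1, -(s2*(vz:ℂ))/d1]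
    let E00 : Fin 4 → ℂ := ![0, (-((vx:ℂ)*(vz:ℂ)) - (vy:ℂ)*Complex.I)/d2,
      (-((vy:ℂ)*(vz:ℂ)) + (vx:ℂ)*Complex.I)/d2, (1 - (vz:ℂ)^2)/d2]
    let E11 : Fin 4 → ℂ := ![0, (-((vx:ℂ)*(vz:ℂ)) + (vy:ℂ)*Complex.I)/d2,
      (-((vy:ℂ)*(vz:ℂ)) - (vx:ℂ)*Complex.I)/d2, (1 - (vz:ℂ)^2)/d2]
    ip E01 E01 = 1 ∧ ip E10 E10 = 1 ∧ ip E00 E00 = 1 ∧ ip E11 E11 = 1 ∧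
    ip E01 E10 = (((1 - 2*β)/(1 - β) : ℝ) : ℂ) ∧
    ip E00 E11 = 0 ∧
    ip E00 E01 = 0 ∧ ip E00 E10 = 0 ∧ ip E11 E01 = 0 ∧ ip E11 E10 = 0 := by
  intro s1 s2 d1 d2 E01 E10 E00 E11
  obtain ⟨hβ₀, hβ⟩ := hβ
  let v : Fin 3 → ℝ := ![vx, vy, vz]
  let e : Fin 3 → ℝ := ![0, 0, 1]
  have hv : v ⬝ᵥ v = 1 := by simpa [v, sq, ← add_assoc] using hunit
  have hve : (v ⬝ᵥ e) ^ 2 < e ⬝ᵥ e := by simpa [v, e] using hvz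
  have h01 : E01 = anticorrelatedState β 1 v := by
    simp [E01, s1, s2, d1, v, anticorrelatedState_vec]
  have h10 : E10 = anticorrelatedState β (-1) v := by
    simp [E10, s1, s2, d1, v, anticorrelatedState_vec]
  have h00 : E00 = correlatedState 1 v e := by simp [E00, d2, v, e, correlatedState_vec]
  have h11 : E11 = correlatedState (-1) v e := by
    simp [E11, d2, v, e, correlatedState_vec, sub_eq_add_neg]
  rw [h01, h10, h00, h11]
  have orthogonal (σ τ : ℝ) : ip (correlatedState σ v e) (anticorrelatedState β τ v) = 0 :=
    ip_correlatedState_anticorrelatedState hv β σ τ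
  exact ⟨ip_anticorrelatedState_self hβ₀ hβ.le hv (one_pow 2),
    ip_anticorrelatedState_self hβ₀ hβ.le hv neg_one_sq,
    ip_correlatedState_self hv hve (one_pow 2), ip_correlatedState_self hv hve neg_one_sq,
    ip_anticorrelatedState_neg hβ₀ hβ.le hv (one_pow 2),
    ip_correlatedState_neg hv hve (one_pow 2),
    orthogonal 1 1, orthogonal 1 (-1), orthogonal (-1) 1, orthogonal (-1) (-1)⟩
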